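/- There exists a constant c > 0, independent of n, such that for every n ≥ 1 the hexacarpet resistance satisfies R_n ≥ c · (5/4)^n. -/

import Mathlib

/-!
The resistance is the inverse of an infimum of energies, so it is enough to exhibit for each `n` a
potential on `G_n^H` with the prescribed boundary values and energy at most a constant times
`(4 / 5) ^ n`, and to see that the infimum is not zero.

*Upper bound on the energy.*  Given a potential on `G_n^H` whose value at each triangle is the mean
of the values on its three sides, extend it to `G_{n+1}^H`: both halves of an old edge inherit its
value, and inside each old triangle take the harmonic extension to the ring of six new triangles.
That ring, with the two halves of each side shorted, is a three-terminal network with exactly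
`5 / 4` times the resistance of the old one, so the energy is multiplied by `4 / 5`
(`triEnergy_kids`).  Edges in the boundary sets are split into edges of the boundary sets, so the
boundary values persist.

The vertices of `G_n^H` are sets of points of the plane, so the extended potential has to be shown
to depend only on the simplex and not on the chain of triangles leading to it.  For this the
potential is defined as a function of a point (`loc`, `pot`), which is evaluated at centroids of
simplices; `loc` locates a point by ordering its barycentric coordinates.  A point that lies in two
children is on their common edge, where both carry the same value, and this gives consistency
(`loc_kids`, `loc_desc`, `pot_sector`).  An overcount of incidences only increases the bound, so no
disjointness of the simplices is needed for the energy estimate (`energy_le`).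

*Positivity.*  A potential difference across one edge of the graph is at most twice the square root
of the energy.  Going around the ring of six children and inducting on `n`, all triangles inside a
sector of the hexagon are connected, adjacent sectors are connected through their common spoke, and
hence `A` is connected to `B` (`link_self`, `energy_lower`).
-/

/-!
Setup for the barycentric subdivision / hexacarpet resistance problem
(Begué, Kelleher, Nelson, Panzo, Pellico, Teplyaev, "Resistance scaling
and the number of spanning trees ..." / Barlow–Bass type estimates).

We realize the repeated barycentric subdivision of a triangle via its
hexagonal planar embedding: for `n ≥ 1` the complex `T_n` is embedded
in the plane with the seven vertices of `T_1` sent to the corners and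
the center of a regular hexagon, and deeper subdivisions computed by
taking barycenters.  The `n`-th level triangles are recorded as ordered
triples of points of the plane.
-/

noncomputable section

namespace BarycentricHexacarpet

attribute [local instance] Classical.propDecidable

/-- Points of the plane. -/
abbrev Pt : Type := ℝ × ℝ

/-- Barycenter of three points. -/
def bary (a b c : Pt) : Pt := (3:ℝ)⁻¹ • (a + b + c)

/-- Midpoint (barycenter of an edge). -/
def mpt (a b : Pt) : Pt := (2:ℝ)⁻¹ • (a + b)

/-- The six triangles of the barycentric subdivision of the triangle `(a,b,c)`,
each recorded as (vertex, barycenter of an edge containing it, barycenter). -/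
def children : Pt × Pt × Pt → Set (Pt × Pt × Pt) := fun t =>
  {(t.1, mpt t.1 t.2.1, bary t.1 t.2.1 t.2.2), (t.2.1, mpt t.1 t.2.1, bary t.1 t.2.1 t.2.2),
   (t.2.1, mpt t.2.1 t.2.2, bary t.1 t.2.1 t.2.2), (t.2.2, mpt t.2.1 t.2.2, bary t.1 t.2.1 t.2.2),
   (t.1, mpt t.1 t.2.2, bary t.1 t.2.1 t.2.2), (t.2.2, mpt t.1 t.2.2, bary t.1 t.2.1 t.2.2)}

/-- The corners of the regular hexagon: `p_0, p_0', p_1, p_1', p_2, p_2'`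
are the corners with indices `0, 1, 2, 3, 4, 5`. -/
def hexCorner (i : ℕ) : Pt := (Real.cos (i * (Real.pi / 3)), Real.sin (i * (Real.pi / 3)))

/-- The set of (ordered) triangles of the `n`-th barycentric subdivision `T_n`
of the triangle, in the hexagonal embedding (defined for `n ≥ 1`):  the six
triangles of `T_1` are the six sectors of the regular hexagon, and each further
subdivision is barycentric. -/
def TriSet : ℕ → Set (Pt × Pt × Pt)
  | 0 => ∅
  | 1 => {t | ∃ i : Fin 6, t = (hexCorner i, hexCorner (i + 1), ((0:ℝ), (0:ℝ)))}
  | (n + 2) => ⋃ t ∈ TriSet (n + 1), children t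

/-- `E_n^2`: the 2-simplexes (triangles) of `T_n`, as 3-element vertex sets. -/
def Simp2 (n : ℕ) : Set (Set Pt) :=
  {s | ∃ t ∈ TriSet n, s = {t.1, t.2.1, t.2.2}}

/-- `E_n^1`: the 1-simplexes (edges) of `T_n`, as 2-element vertex sets. -/
def Simp1 (n : ℕ) : Set (Set Pt) :=
  {s | ∃ t ∈ TriSet n, s = {t.1, t.2.1} ∨ s = {t.2.1, t.2.2} ∨ s = {t.1, t.2.2}}

/-- `E_n^0`: the 0-simplexes (vertices) of `T_n`. -/
def Simp0 (n : ℕ) : Set Pt :=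
  {p | ∃ t ∈ TriSet n, p = t.1 ∨ p = t.2.1 ∨ p = t.2.2}

/-- Conductances of the 1-skeleton graph `G_n^T`:  vertices `p ≠ q` are adjacent
iff `{p,q}` is an edge of `T_n`; the conductance is `2` if the edge is contained
in exactly one triangle of `T_n`, and `1` if it is contained in two triangles. -/
def cT (n : ℕ) (p q : Pt) : ℝ :=
  if p ≠ q ∧ ({p, q} : Set Pt) ∈ Simp1 n then
    (if {f ∈ Simp2 n | p ∈ f ∧ q ∈ f}.ncard = 1 then 2 else 1)
  else 0

/-- Conductances of the (modified) hexacarpet graph `G_n^H`:  its vertex set is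
`E_n^2 ∪ E_n^1`, an edge `e ∈ E_n^1` is adjacent to a triangle `f ∈ E_n^2` iff
`e` is a face of `f`, and every edge of the graph has conductance `1/2`. -/
def cH (n : ℕ) (u v : Set Pt) : ℝ :=
  if (u ∈ Simp1 n ∧ v ∈ Simp2 n ∧ u ⊆ v) ∨ (v ∈ Simp1 n ∧ u ∈ Simp2 n ∧ v ⊆ u)
  then 1 / 2 else 0

/-- The energy of a potential `f` on a weighted graph with conductances `c`:
`E(f) = (1/2) ∑ c p q * (f p - f q)^2`. -/
def energy {V : Type} (c : V → V → ℝ) (f : V → ℝ) : ℝ :=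
  (1 / 2) * ∑' p : V, ∑' q : V, c p q * (f p - f q) ^ 2

/-- The effective resistance between `A` and `B`:
`R(A,B) = (inf {E(f) : f ≡ 0 on A, f ≡ 1 on B})⁻¹`. -/
def effRes {V : Type} (c : V → V → ℝ) (A B : Set V) : ℝ :=
  (sInf {e : ℝ | ∃ f : V → ℝ, (∀ p ∈ A, f p = 0) ∧ (∀ p ∈ B, f p = 1) ∧ e = energy c f})⁻¹

/-- The `i`-th closed side of the hexagon. -/
def hexSide (i : ℕ) : Set Pt := segment ℝ (hexCorner i) (hexCorner (i + 1))

/-- `L_i^{(n,T)}`: the vertices of `G_n^T` whose geometric realization lies in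
the `i`-th closed side of the hexagon. -/
def LsetT (n i : ℕ) : Set Pt := {p ∈ Simp0 n | p ∈ hexSide i}

/-- `L_i^{(n,H)}`: the vertices of `G_n^H` whose geometric realization lies in
the `i`-th closed side of the hexagon. -/
def LsetH (n i : ℕ) : Set (Set Pt) :=
  {v ∈ Simp2 n ∪ Simp1 n | convexHull ℝ v ⊆ hexSide i}

/-- `R_n^T`: the effective resistance in `G_n^T` between
`A_{(n)}^T = L_2^{(n,T)}` and `B_{(n)}^T = L_5^{(n,T)}`. -/
def RT (n : ℕ) : ℝ := effRes (cT n) (LsetT n 2) (LsetT n 5)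

/-- `R_n`: the effective resistance in `G_n^H` between
`A_{(n)}^H = L_0^{(n,H)} ∪ L_1^{(n,H)}` and `B_{(n)}^H = L_3^{(n,H)} ∪ L_4^{(n,H)}`. -/
def RH (n : ℕ) : ℝ :=
  effRes (cH n) (LsetH n 0 ∪ LsetH n 1) (LsetH n 3 ∪ LsetH n 4)

end BarycentricHexacarpet

namespace BarycentricHexacarpet

/-! ### The harmonic extension rule -/

/-- Ordered triangles in the plane. -/
abbrev Tri : Type := Pt × Pt × Pt

/-- Values of a potential on the three sides of an ordered triangle `(a, b, c)`; the first entry is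
the value on the side opposite to `a`, and so on. -/
abbrev Lab : Type := ℝ × ℝ × ℝ

/-- Extended value on the new edge joining the midpoint of a side to the barycenter, where `z` is
the value on that side and `x`, `y` are the values on the other two sides. -/
def midVal (x y z : ℝ) : ℝ := (2 * x + 2 * y + 11 * z) / 15

/-- Extended value on the new edge joining a vertex to the barycenter, where `x` is the value on the
side opposite to that vertex and `y`, `z` are the values on the other two sides. -/
def spokeVal (x y z : ℝ) : ℝ := (x + 7 * y + 7 * z) / 15

/-- The six triangles of the barycentric subdivision of a labelled triangle, in the order of
`children`, with the labels of the harmonic extension: half-sides inherit the value of the side. -/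
def kids (y : Tri × Lab) : List (Tri × Lab) :=
  match y with
  | ((a, b, c), (x, y, z)) =>
    [((a, mpt a b, bary a b c), (midVal x y z, spokeVal x y z, z)),
     ((b, mpt a b, bary a b c), (midVal x y z, spokeVal y x z, z)),
     ((b, mpt b c, bary a b c), (midVal y z x, spokeVal y x z, x)),
     ((c, mpt b c, bary a b c), (midVal y z x, spokeVal z x y, x)),
     ((a, mpt a c, bary a b c), (midVal x z y, spokeVal x y z, y)),
     ((c, mpt a c, bary a b c), (midVal x z y, spokeVal z x y, y))]

/-- The labelled triangles of the `n`-fold subdivision of a labelled triangle. -/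
def desc : ℕ → Tri × Lab → List (Tri × Lab)
  | 0, y => [y]
  | n + 1, y => (kids y).flatMap (desc n)

/-- The energy carried by a triangle with side values `u` when the triangle itself is given the
mean of the three values. -/
def triEnergy (u : Lab) : ℝ :=
  (1 / 2) * ((u.1 - (u.1 + u.2.1 + u.2.2) / 3) ^ 2 + (u.2.1 - (u.1 + u.2.1 + u.2.2) / 3) ^ 2
    + (u.2.2 - (u.1 + u.2.1 + u.2.2) / 3) ^ 2)

/-- The energy contraction by the factor `4 / 5`: a ring of six triangles with the two halves of
every side shorted is a three-terminal network with `5 / 4` times the original resistance. -/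
lemma triEnergy_kids (y : Tri × Lab) :
    ((kids y).map fun z => triEnergy z.2).sum = 4 / 5 * triEnergy y.2 := by
  obtain ⟨⟨a, b, c⟩, x, y, z⟩ := y
  simp only [kids, List.map_cons, List.map_nil, List.sum_cons, List.sum_nil, triEnergy, midVal,
    spokeVal]
  ring

lemma triEnergy_desc (n : ℕ) (y : Tri × Lab) :
    ((desc n y).map fun z => triEnergy z.2).sum = (4 / 5) ^ n * triEnergy y.2 := by
  induction n generalizing y with
  | zero => simp [desc]
  | succ n ih =>
    have key : ∀ l : List (Tri × Lab), ((l.flatMap (desc n)).map fun z => triEnergy z.2).sum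
        = (4 / 5) ^ n * (l.map fun z => triEnergy z.2).sum := by
      intro l
      induction l with
      | nil => simp
      | cons w l ihl =>
        rw [List.flatMap_cons, List.map_append, List.sum_append, ihl, ih, List.map_cons,
          List.sum_cons]
        ring
    rw [desc, key, triEnergy_kids]
    ring

lemma desc_succ (n : ℕ) (y : Tri × Lab) : desc (n + 1) y = (desc n y).flatMap kids := by
  induction n generalizing y with
  | zero => simp [desc]
  | succ n ih =>
    rw [desc, desc, List.flatMap_assoc]
    congr 1
    funext w
    exact ih w

/-! ### The potential as a function of barycentric coordinates -/

/-- The value of the `n`-fold extended potential at the point with barycentric coordinates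
`(a, b, c)` in a triangle with side values `(x, y, z)`.  A point on a side gets the value of the
side; an interior point lies in a child triangle found by ordering its coordinates, in which its
coordinates are `(first - second, 2 * (second - third), 3 * third)`.  The value is only meaningful
away from the vertices of the subdivision.  The coordinate `c` is tested first, so that the whole
closed side `c = 0` gets the value `z`. -/
def loc : ℕ → ℝ → ℝ → ℝ → ℝ → ℝ → ℝ → ℝ
  | 0, x, y, z, a, b, c =>
    if c = 0 then z else if b = 0 then y else if a = 0 then x else (x + y + z) / 3
  | n + 1, x, y, z, a, b, c =>
    if c = 0 then z else if b = 0 then y else if a = 0 then x else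
    if c ≤ b ∧ b ≤ a then
      loc n (midVal x y z) (spokeVal x y z) z (a - b) (2 * (b - c)) (3 * c)
    else if c ≤ a ∧ a ≤ b then
      loc n (midVal x y z) (spokeVal y x z) z (b - a) (2 * (a - c)) (3 * c)
    else if a ≤ c ∧ c ≤ b then
      loc n (midVal y z x) (spokeVal y x z) x (b - c) (2 * (c - a)) (3 * a)
    else if a ≤ b ∧ b ≤ c then
      loc n (midVal y z x) (spokeVal z x y) x (c - b) (2 * (b - a)) (3 * a)
    else if b ≤ c ∧ c ≤ a then
      loc n (midVal x z y) (spokeVal x y z) y (a - c) (2 * (c - b)) (3 * b)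
    else
      loc n (midVal x z y) (spokeVal z x y) y (c - a) (2 * (a - b)) (3 * b)

lemma loc_c (n : ℕ) {x y z a b c : ℝ} (hc : c = 0) : loc n x y z a b c = z := by
  cases n <;> simp [loc, hc]

lemma loc_b (n : ℕ) {x y z a b c : ℝ} (hc : c ≠ 0) (hb : b = 0) : loc n x y z a b c = y := by
  cases n <;> simp [loc, hc, hb]

lemma loc_a (n : ℕ) {x y z a b c : ℝ} (hc : c ≠ 0) (hb : b ≠ 0) (ha : a = 0) :
    loc n x y z a b c = x := by
  cases n <;> simp [loc, hc, hb, ha]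

/-- Barycentric coordinates (normalized) of a point of a closed triangle that is not a vertex. -/
def Good (a b c : ℝ) : Prop :=
  0 ≤ a ∧ 0 ≤ b ∧ 0 ≤ c ∧ a + b + c = 1 ∧ 0 < a + b ∧ 0 < b + c ∧ 0 < a + c

/-- The point with given coordinates with respect to an ordered triangle. -/
def ev (t : Tri) (a b c : ℝ) : Pt := a • t.1 + b • t.2.1 + c • t.2.2

set_option maxHeartbeats 4000000 in
/-- The rule used by `loc` to pick a child is consistent: on an inner edge shared by two children
both give the value of that edge.  The coordinates in the parent come from
`mpt u v = (u + v) / 2` and `bary u v w = (u + v + w) / 3`. -/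
lemma loc_kids (n : ℕ) {y w : Tri × Lab} (hw : w ∈ kids y) {p q r : ℝ} (hg : Good p q r) :
    ∃ a b c, Good a b c ∧ ev y.1 a b c = ev w.1 p q r ∧
      loc (n + 1) y.2.1 y.2.2.1 y.2.2.2 a b c = loc n w.2.1 w.2.2.1 w.2.2.2 p q r := by
  obtain ⟨⟨A, B, C⟩, x, y, z⟩ := y
  obtain ⟨hp, hq, hr, hs, hpq, hqr, hpr⟩ := hg
  -- either the point lies on a half-side of the parent, or all its coordinates in the parent are
  -- positive
  have hr' : r = 0 ∧ 0 < p ∧ 0 < q ∨ 0 < r := by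
    rcases hr.eq_or_lt with h | h
    · left; refine ⟨h.symm, by linarith, by linarith⟩
    · right; exact h
  simp only [kids, List.mem_cons, List.not_mem_nil, or_false] at hw
  rcases hw with rfl | rfl | rfl | rfl | rfl | rfl <;>
    [use p + q / 2 + r / 3, q / 2 + r / 3, r / 3;
     use q / 2 + r / 3, p + q / 2 + r / 3, r / 3;
     use r / 3, p + q / 2 + r / 3, q / 2 + r / 3;
     use r / 3, q / 2 + r / 3, p + q / 2 + r / 3;
     use p + q / 2 + r / 3, r / 3, q / 2 + r / 3;
     use q / 2 + r / 3, r / 3, p + q / 2 + r / 3]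
  all_goals
    refine ⟨⟨?_, ?_, ?_, ?_, ?_, ?_, ?_⟩, ?_, ?_⟩
    iterate 7 linarith
    · ext <;> simp [ev, mpt, bary] <;> ring
    rcases hr' with ⟨rfl, hp', hq'⟩ | hr'
    · rw [loc_c n rfl]
      simp only [loc, zero_div, add_zero, if_true]
      try rw [if_neg (by linarith)]
      try rw [if_neg (by linarith)]
    · rw [loc, if_neg (by linarith), if_neg (by linarith), if_neg (by linarith)]
      rcases hp.eq_or_lt with rfl | hp'
      · rw [loc_a n hr'.ne' (by linarith) rfl]
        split_ifs <;> first
          | exact loc_a n (by linarith) (by linarith) (by linarith)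
          | (exfalso; grind)
      · rcases hq.eq_or_lt with rfl | hq'
        · rw [loc_b n hr'.ne' rfl]
          split_ifs <;> first
            | exact loc_b n (by linarith) (by linarith)
            | (exfalso; grind)
        · split_ifs <;> first
            | (exfalso; linarith)
            | (congr 1 <;> ring1)
            | (exfalso; grind)

/-- The value on a simplex of the `n`-fold subdivision, read off at one of its relatively interior
points, is `loc n` at the coordinates of that point in the original triangle. -/
lemma loc_desc (n : ℕ) {y w : Tri × Lab} (hw : w ∈ desc n y) {p q r : ℝ} (hg : Good p q r) :
    ∃ a b c, Good a b c ∧ ev y.1 a b c = ev w.1 p q r ∧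
      loc n y.2.1 y.2.2.1 y.2.2.2 a b c = loc 0 w.2.1 w.2.2.1 w.2.2.2 p q r := by
  induction n generalizing y with
  | zero =>
    obtain rfl : w = y := by simpa [desc] using hw
    exact ⟨p, q, r, hg, rfl, rfl⟩
  | succ n ih =>
    obtain ⟨v, hv, hwv⟩ := List.mem_flatMap.1 hw
    obtain ⟨a, b, c, hg', h1, h2⟩ := ih hwv
    obtain ⟨a', b', c', hg'', h3, h4⟩ := loc_kids n hv hg'
    exact ⟨a', b', c', hg'', h3.trans h1, h4.trans h2⟩

lemma loc_const (n : ℕ) (k a b c : ℝ) : loc n k k k a b c = k := by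
  induction n generalizing a b c with
  | zero => simp only [loc]; split_ifs <;> ring
  | succ n ih =>
    have h1 : midVal k k k = k := by unfold midVal; ring
    have h2 : spokeVal k k k = k := by unfold spokeVal; ring
    simp only [loc, h1, h2, ih, ite_self]

/-! ### The six sectors of the hexagon -/

/-- The six sectors of the hexagon, with the labels of a potential on `T_1` equal to `0` on the
sides `0, 1`, to `1` on the sides `3, 4`, and to `1 / 2` on all other edges. -/
def sectors : List (Tri × Lab) :=
  [((hexCorner 0, hexCorner 1, 0), (1 / 2, 1 / 2, 0)),
   ((hexCorner 1, hexCorner 2, 0), (1 / 2, 1 / 2, 0)),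
   ((hexCorner 2, hexCorner 3, 0), (1 / 2, 1 / 2, 1 / 2)),
   ((hexCorner 3, hexCorner 4, 0), (1 / 2, 1 / 2, 1)),
   ((hexCorner 4, hexCorner 5, 0), (1 / 2, 1 / 2, 1)),
   ((hexCorner 5, hexCorner 6, 0), (1 / 2, 1 / 2, 1 / 2))]

/-- The labelled triangles of `T_{n+1}`. -/
def leaves (n : ℕ) : List (Tri × Lab) := sectors.flatMap (desc n)

lemma mem_triSet (n : ℕ) (t : Tri) : t ∈ TriSet (n + 1) ↔ ∃ u, (t, u) ∈ leaves n := by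
  have hmap : ∀ l : List (Tri × Lab), (∃ u, (t, u) ∈ l) ↔ t ∈ l.map Prod.fst := by simp
  induction n generalizing t with
  | zero =>
    have h0 : ((0 : ℝ), (0 : ℝ)) = (0 : Pt) := rfl
    rw [hmap]
    simp only [TriSet, Set.mem_ofPred_eq, leaves, desc, sectors, h0, List.flatMap_cons,
      List.flatMap_nil, List.append_nil, List.cons_append, List.nil_append, List.map_cons,
      List.map_nil, List.mem_cons, List.not_mem_nil, or_false]
    constructor
    · rintro ⟨i, rfl⟩
      fin_cases i <;> simp
    · rintro (rfl | rfl | rfl | rfl | rfl | rfl)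
      exacts [⟨0, by simp⟩, ⟨1, by simp⟩, ⟨2, by simp⟩, ⟨3, by simp⟩, ⟨4, by simp⟩, ⟨5, by simp⟩]
  | succ n ih =>
    have hl : leaves (n + 1) = (leaves n).flatMap kids := by
      rw [leaves, leaves, List.flatMap_assoc]
      congr 1
      funext w
      exact desc_succ n w
    have hk : ∀ (s : Tri) (v : Lab), t ∈ children s ↔ ∃ u, (t, u) ∈ kids (s, v) := by
      rintro ⟨a, b, c⟩ ⟨x, y, z⟩
      rw [hmap]
      simp only [children, kids, Set.mem_insert_iff, Set.mem_singleton_iff, List.map_cons,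
        List.map_nil, List.mem_cons, List.not_mem_nil, or_false]
    simp only [TriSet, Set.mem_iUnion, exists_prop, hl, List.mem_flatMap]
    constructor
    · rintro ⟨s, hs, ht⟩
      obtain ⟨v, hv⟩ := (ih s (by simp)).1 hs
      obtain ⟨u, hu⟩ := (hk s v).1 ht
      exact ⟨u, _, hv, hu⟩
    · rintro ⟨u, ⟨s, v⟩, hv, hu⟩
      exact ⟨s, (ih s (by simp)).2 ⟨v, hv⟩, (hk s v).2 ⟨u, hu⟩⟩

lemma hexCorner_vals :
    hexCorner 0 = (1, 0) ∧ hexCorner 1 = (1 / 2, √3 / 2) ∧ hexCorner 2 = (-(1 / 2), √3 / 2) ∧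
    hexCorner 3 = (-1, 0) ∧ hexCorner 4 = (-(1 / 2), -(√3 / 2)) ∧
    hexCorner 5 = (1 / 2, -(√3 / 2)) ∧ hexCorner 6 = (1, 0) := by
  have e1 : (1 : ℕ) * (Real.pi / 3) = Real.pi / 3 := by push_cast; ring
  have e2 : (2 : ℕ) * (Real.pi / 3) = Real.pi - Real.pi / 3 := by push_cast; ring
  have e3 : (3 : ℕ) * (Real.pi / 3) = Real.pi := by push_cast; ring
  have e4 : (4 : ℕ) * (Real.pi / 3) = Real.pi / 3 + Real.pi := by push_cast; ring
  have e5 : (5 : ℕ) * (Real.pi / 3) = 2 * Real.pi - Real.pi / 3 := by push_cast; ring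
  have e6 : (6 : ℕ) * (Real.pi / 3) = 2 * Real.pi := by push_cast; ring
  refine ⟨?_, ?_, ?_, ?_, ?_, ?_, ?_⟩ <;> unfold hexCorner
  · simp
  · rw [e1, Real.cos_pi_div_three, Real.sin_pi_div_three]
  · rw [e2, Real.cos_pi_sub, Real.sin_pi_sub, Real.cos_pi_div_three, Real.sin_pi_div_three]
  · rw [e3, Real.cos_pi, Real.sin_pi]
  · rw [e4, Real.cos_add_pi, Real.sin_add_pi, Real.cos_pi_div_three, Real.sin_pi_div_three]
  · rw [e5, Real.cos_two_pi_sub, Real.sin_two_pi_sub, Real.cos_pi_div_three,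
      Real.sin_pi_div_three]
  · rw [e6, Real.cos_two_pi, Real.sin_two_pi]

/-- First coordinate of a point in the basis `hexCorner 0, hexCorner 1`. -/
def cα (x : Pt) : ℝ := x.1 - x.2 / √3

/-- Second coordinate of a point in the basis `hexCorner 0, hexCorner 1`. -/
def cβ (x : Pt) : ℝ := 2 * x.2 / √3

/-- The potential on the hexagon: `loc` in the sectors `0, 1, 3, 4` and the constant `1 / 2`
elsewhere.  The closed sectors with labelled outer side are tested first, so that every corner on
an outer side gets the value of that side. -/
def pot (n : ℕ) (α β : ℝ) : ℝ :=
  if 0 ≤ α ∧ 0 ≤ β then loc n (1 / 2) (1 / 2) 0 α β (1 - α - β)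
  else if α ≤ 0 ∧ 0 ≤ α + β then loc n (1 / 2) (1 / 2) 0 (α + β) (-α) (1 - β)
  else if α ≤ 0 ∧ β ≤ 0 then loc n (1 / 2) (1 / 2) 1 (-α) (-β) (1 + α + β)
  else if 0 ≤ α ∧ α + β ≤ 0 then loc n (1 / 2) (1 / 2) 1 (-α - β) α (1 + β)
  else 1 / 2

/-- The potential on all vertices of the hexacarpet graph of `T_{n+1}`, through the centroid of the
vertex set of a simplex. -/
def potSet (n : ℕ) (s : Set Pt) : ℝ :=
  let x : Pt := (s.ncard : ℝ)⁻¹ • ∑ᶠ p ∈ s, p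
  pot n (cα x) (cβ x)

lemma coord_ev (P Q : Pt) (a b c : ℝ) :
    cα (ev (P, Q, 0) a b c) = a * cα P + b * cα Q ∧
      cβ (ev (P, Q, 0) a b c) = a * cβ P + b * cβ Q := by
  constructor <;> simp [cα, cβ, ev] <;> ring

lemma coord_corner :
    (cα (hexCorner 0) = 1 ∧ cβ (hexCorner 0) = 0) ∧ (cα (hexCorner 1) = 0 ∧ cβ (hexCorner 1) = 1) ∧
    (cα (hexCorner 2) = -1 ∧ cβ (hexCorner 2) = 1) ∧
    (cα (hexCorner 3) = -1 ∧ cβ (hexCorner 3) = 0) ∧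
    (cα (hexCorner 4) = 0 ∧ cβ (hexCorner 4) = -1) ∧
    (cα (hexCorner 5) = 1 ∧ cβ (hexCorner 5) = -1) ∧
    (cα (hexCorner 6) = 1 ∧ cβ (hexCorner 6) = 0) := by
  have h3 : √3 ≠ 0 := by positivity
  obtain ⟨h0, h1, h2, h3', h4, h5, h6⟩ := hexCorner_vals
  simp only [h0, h1, h2, h3', h4, h5, h6, cα, cβ]
  refine ⟨⟨?_, ?_⟩, ⟨?_, ?_⟩, ⟨?_, ?_⟩, ⟨?_, ?_⟩, ⟨?_, ?_⟩, ⟨?_, ?_⟩, ⟨?_, ?_⟩⟩ <;> field_simp <;>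
    norm_num

/-- On the spoke shared by two sectors both give the value `1 / 2`, so the order of the tests in
`pot` does not matter at non-vertices. -/
lemma pot_sector (n : ℕ) {y : Tri × Lab} (hy : y ∈ sectors) {a b c : ℝ} (hg : Good a b c) :
    pot n (cα (ev y.1 a b c)) (cβ (ev y.1 a b c)) = loc n y.2.1 y.2.2.1 y.2.2.2 a b c := by
  obtain ⟨h0, h1, h2, h3, h4, h5, h6⟩ := coord_corner
  obtain ⟨ha, hb, hc, hs, hab, hbc, hac⟩ := hg
  simp only [sectors, List.mem_cons, List.not_mem_nil, or_false] at hy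
  have hA : ∀ v p q r : ℝ, 0 < r → p = 0 → 0 < q → loc n (1 / 2) (1 / 2) v p q r = 1 / 2 :=
    fun v p q r hr hp hq => loc_a n hr.ne' hq.ne' hp
  have hB : ∀ v p q r : ℝ, 0 < r → q = 0 → loc n (1 / 2) (1 / 2) v p q r = 1 / 2 :=
    fun v p q r hr hq => loc_b n hr.ne' hq
  rcases hy with rfl | rfl | rfl | rfl | rfl | rfl
  all_goals
    simp only [(coord_ev _ _ a b c).1, (coord_ev _ _ a b c).2, h0, h1, h2, h3, h4, h5, h6, pot,
      loc_const]
    split_ifs <;> first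
      | rfl
      | (congr 1 <;> linarith)
      | (refine Eq.trans (b := 1 / 2) ?_ (Eq.symm ?_) <;> first
          | rfl
          | exact hA _ _ _ _ (by linarith) (by linarith) (by linarith)
          | exact hB _ _ _ _ (by linarith) (by linarith))
      | (exfalso; grind)

lemma pot_side {n : ℕ} {x : Pt} :
    (x ∈ hexSide 0 ∪ hexSide 1 → pot n (cα x) (cβ x) = 0) ∧
      (x ∈ hexSide 3 ∪ hexSide 4 → pot n (cα x) (cβ x) = 1) := by
  obtain ⟨h0, h1, h2, h3, h4, h5, h6⟩ := coord_corner
  have key : ∀ i, x ∈ hexSide i → ∃ a b : ℝ, 0 ≤ a ∧ 0 ≤ b ∧ a + b = 1 ∧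
      cα x = a * cα (hexCorner i) + b * cα (hexCorner (i + 1)) ∧
      cβ x = a * cβ (hexCorner i) + b * cβ (hexCorner (i + 1)) := by
    rintro i ⟨a, b, ha, hb, hab, rfl⟩
    refine ⟨a, b, ha, hb, hab, ?_, ?_⟩ <;> simp [cα, cβ] <;> ring
  constructor
  all_goals
    rintro (h | h) <;> obtain ⟨a, b, ha, hb, hab, e1, e2⟩ := key _ h <;>
      simp only [h0, h1, h2, h3, h4, h5, Nat.reduceAdd, zero_add] at e1 e2 <;>
      rw [e1, e2, pot] <;> split_ifs <;> first
        | exact loc_c n (by linarith)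
        | (exfalso; grind)

/-! ### Edges and faces -/

/-- The vertex set of an ordered triangle. -/
def triPts (t : Tri) : Set Pt := {t.1, t.2.1, t.2.2}

/-- The side of an ordered triangle opposite to its `j`-th vertex. -/
def side (t : Tri) (j : Fin 3) : Set Pt :=
  match j with
  | 0 => {t.2.1, t.2.2}
  | 1 => {t.1, t.2.2}
  | 2 => {t.1, t.2.1}

/-- Twice the signed area of an ordered triangle. -/
def area (t : Tri) : ℝ :=
  (t.2.1.1 - t.1.1) * (t.2.2.2 - t.1.2) - (t.2.1.2 - t.1.2) * (t.2.2.1 - t.1.1)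

lemma area_kids {y w : Tri × Lab} (hw : w ∈ kids y) (hy : area y.1 ≠ 0) : area w.1 ≠ 0 := by
  have h : area w.1 = area y.1 / 6 ∨ area w.1 = -(area y.1 / 6) := by
    obtain ⟨⟨a, b, c⟩, x, y, z⟩ := y
    simp only [kids, List.mem_cons, List.not_mem_nil, or_false] at hw
    rcases hw with rfl | rfl | rfl | rfl | rfl | rfl
    · left; simp [area, mpt, bary]; ring
    · right; simp [area, mpt, bary]; ring
    · left; simp [area, mpt, bary]; ring
    · right; simp [area, mpt, bary]; ring
    · right; simp [area, mpt, bary]; ring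
    · left; simp [area, mpt, bary]; ring
  rcases h with h | h <;> rw [h] <;> simpa using hy

lemma area_desc (n : ℕ) {y w : Tri × Lab} (hw : w ∈ desc n y) (hy : area y.1 ≠ 0) :
    area w.1 ≠ 0 := by
  induction n generalizing y with
  | zero =>
    obtain rfl : w = y := by simpa [desc] using hw
    exact hy
  | succ n ih =>
    obtain ⟨v, hv, hwv⟩ := List.mem_flatMap.1 hw
    exact ih hwv (area_kids hv hy)

lemma area_leaves (n : ℕ) {w : Tri × Lab} (hw : w ∈ leaves n) : area w.1 ≠ 0 := by
  obtain ⟨y, hy, hw⟩ := List.mem_flatMap.1 hw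
  refine area_desc n hw ?_
  obtain ⟨h0, h1, h2, h3, h4, h5, h6⟩ := hexCorner_vals
  have h3' : 0 < √3 := by positivity
  simp only [sectors, List.mem_cons, List.not_mem_nil, or_false] at hy
  rcases hy with rfl | rfl | rfl | rfl | rfl | rfl <;>
    (simp only [area, h0, h1, h2, h3, h4, h5, h6, Prod.fst_zero, Prod.snd_zero]
     apply ne_of_gt; linarith)

lemma distinct {t : Tri} (h : area t ≠ 0) : t.1 ≠ t.2.1 ∧ t.2.1 ≠ t.2.2 ∧ t.1 ≠ t.2.2 := by
  refine ⟨fun e => h ?_, fun e => h ?_, fun e => h ?_⟩ <;> simp [area, e] <;> ring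

lemma exists_leaf {n : ℕ} {t : Tri} (ht : t ∈ TriSet (n + 1)) :
    area t ≠ 0 ∧ ∃ i : Fin (leaves n).length, (leaves n)[i].1 = t := by
  obtain ⟨u, hu⟩ := (mem_triSet n t).1 ht
  obtain ⟨i, hi, e⟩ := List.mem_iff_getElem.1 hu
  exact ⟨area_leaves n hu, ⟨i, hi⟩, by simp [e]⟩

lemma side_subset (t : Tri) (j : Fin 3) : side t j ⊆ triPts t := by
  fin_cases j <;> simp [side, triPts, Set.insert_subset_iff]

lemma mem_simp1 {n : ℕ} {s : Set Pt} : s ∈ Simp1 n ↔ ∃ t ∈ TriSet n, ∃ j, s = side t j := by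
  simp only [Simp1, Set.mem_ofPred_eq]
  refine exists_congr fun t => and_congr_right fun _ => ⟨?_, ?_⟩
  · rintro (h | h | h)
    exacts [⟨2, h⟩, ⟨0, h⟩, ⟨1, h⟩]
  · rintro ⟨j, h⟩
    fin_cases j
    exacts [.inr (.inl h), .inr (.inr h), .inl h]

lemma mem_simp2 {n : ℕ} {s : Set Pt} : s ∈ Simp2 n ↔ ∃ t ∈ TriSet n, s = triPts t := Iff.rfl

/-- Incident pairs (edge, triangle) of `T_{n+1}`, enumerated by leaves and sides. -/
lemma exists_incidence {n : ℕ} {u v : Set Pt} (hu : u ∈ Simp1 (n + 1)) (hv : v ∈ Simp2 (n + 1))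
    (huv : u ⊆ v) :
    ∃ (i : Fin (leaves n).length) (j : Fin 3),
      u = side (leaves n)[i].1 j ∧ v = triPts (leaves n)[i].1 := by
  obtain ⟨t, ht, rfl⟩ := mem_simp2.1 hv
  obtain ⟨-, i, hi⟩ := exists_leaf ht
  suffices h : ∃ j, u = side t j by
    obtain ⟨j, hj⟩ := h
    exact ⟨i, j, by rw [hi, hj], by rw [hi]⟩
  -- an edge has two distinct points, so it is one of the three pairs
  have hpq : ∃ p q, p ≠ q ∧ u = {p, q} := by
    obtain ⟨s, hs, h⟩ := hu
    obtain ⟨h1, h2, h3⟩ := distinct (exists_leaf hs).1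
    rcases h with h | h | h
    exacts [⟨_, _, h1, h⟩, ⟨_, _, h2, h⟩, ⟨_, _, h3, h⟩]
  obtain ⟨p, q, hne, rfl⟩ := hpq
  obtain ⟨a, b, c⟩ := t
  have hp : p ∈ triPts (a, b, c) := huv (by simp)
  have hq : q ∈ triPts (a, b, c) := huv (by simp)
  simp only [triPts, Set.mem_insert_iff, Set.mem_singleton_iff] at hp hq
  rcases hp with rfl | rfl | rfl <;> rcases hq with rfl | rfl | rfl <;>
    first
      | exact absurd rfl hne
      | exact ⟨0, rfl⟩
      | exact ⟨1, rfl⟩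
      | exact ⟨2, rfl⟩
      | exact ⟨0, Set.pair_comm _ _⟩
      | exact ⟨1, Set.pair_comm _ _⟩
      | exact ⟨2, Set.pair_comm _ _⟩

/-! ### Energy as a finite sum -/

lemma cH_nonneg (N : ℕ) (u v : Set Pt) : 0 ≤ cH N u v := by
  unfold cH; split_ifs <;> norm_num

lemma energy_eq_sum (n : ℕ) : ∃ V : Finset (Set Pt),
    (∀ u v, cH (n + 1) u v ≠ 0 → u ∈ V ∧ v ∈ V) ∧
    ∀ f, energy (cH (n + 1)) f = (1 / 2) * ∑ u ∈ V, ∑ v ∈ V, cH (n + 1) u v * (f u - f v) ^ 2 := by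
  classical
  let V : Finset (Set Pt) :=
    (Finset.univ.image fun k : Fin (leaves n).length × Fin 3 => side (leaves n)[k.1].1 k.2) ∪
    (Finset.univ.image fun i : Fin (leaves n).length => triPts (leaves n)[i].1)
  have hV : ∀ u v, cH (n + 1) u v ≠ 0 → u ∈ V ∧ v ∈ V := by
    intro u v h
    have h' : (u ∈ Simp1 (n + 1) ∧ v ∈ Simp2 (n + 1) ∧ u ⊆ v) ∨
        (v ∈ Simp1 (n + 1) ∧ u ∈ Simp2 (n + 1) ∧ v ⊆ u) := by
      by_contra hc
      exact h (if_neg hc)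
    have hs : ∀ (i : Fin (leaves n).length) (j : Fin 3), side (leaves n)[i].1 j ∈ V := fun i j =>
      Finset.mem_union_left _ (Finset.mem_image.2 ⟨(i, j), Finset.mem_univ _, rfl⟩)
    have ht : ∀ i : Fin (leaves n).length, triPts (leaves n)[i].1 ∈ V := fun i =>
      Finset.mem_union_right _ (Finset.mem_image.2 ⟨i, Finset.mem_univ _, rfl⟩)
    rcases h' with ⟨h1, h2, h3⟩ | ⟨h1, h2, h3⟩
    · obtain ⟨i, j, rfl, rfl⟩ := exists_incidence h1 h2 h3
      exact ⟨hs i j, ht i⟩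
    · obtain ⟨i, j, rfl, rfl⟩ := exists_incidence h1 h2 h3
      exact ⟨ht i, hs i j⟩
  refine ⟨V, hV, fun f => ?_⟩
  have h0 : ∀ u v, ¬(u ∈ V ∧ v ∈ V) → cH (n + 1) u v * (f u - f v) ^ 2 = 0 := by
    intro u v h
    rw [show cH (n + 1) u v = 0 by by_contra hc; exact h (hV u v hc), zero_mul]
  unfold energy
  rw [tsum_eq_sum (s := V)]
  · congr 1
    refine Finset.sum_congr rfl fun u _ => ?_
    exact tsum_eq_sum fun v hv => h0 u v fun h => hv h.2
  · intro u hu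
    rw [tsum_congr fun v => h0 u v fun h => hu h.1, tsum_zero]

/-- The energy is at most the sum over all leaves and their sides. -/
lemma energy_le (n : ℕ) (f : Set Pt → ℝ) :
    energy (cH (n + 1)) f ≤ ∑ i : Fin (leaves n).length, ∑ j : Fin 3,
      1 / 2 * (f (side (leaves n)[i].1 j) - f (triPts (leaves n)[i].1)) ^ 2 := by
  classical
  obtain ⟨V, hV, hE⟩ := energy_eq_sum n
  rw [hE, ← Finset.sum_product', ← Fintype.sum_prod_type']
  let g : Set Pt × Set Pt → ℝ := fun k => 1 / 2 * (f k.1 - f k.2) ^ 2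
  let I : Finset (Set Pt × Set Pt) := Finset.univ.image
    fun k : Fin (leaves n).length × Fin 3 => (side (leaves n)[k.1].1 k.2, triPts (leaves n)[k.1].1)
  have hg : ∀ k, 0 ≤ g k := fun k => by positivity
  -- each conductance is dominated by the indicators of an incidence and of its reverse
  have hle : ∀ k ∈ V ×ˢ V, cH (n + 1) k.1 k.2 * (f k.1 - f k.2) ^ 2 ≤
      (if k ∈ I then g k else 0) + (if k.swap ∈ I then g k.swap else 0) := by
    rintro ⟨u, v⟩ -
    have p1 : 0 ≤ if (u, v) ∈ I then g (u, v) else 0 := by split_ifs <;> simp [hg]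
    have p2 : 0 ≤ if (v, u) ∈ I then g (v, u) else 0 := by split_ifs <;> simp [hg]
    simp only [Prod.swap]
    have hI : ∀ u v, u ∈ Simp1 (n + 1) → v ∈ Simp2 (n + 1) → u ⊆ v → (u, v) ∈ I := by
      intro u v h1 h2 h3
      obtain ⟨i, j, rfl, rfl⟩ := exists_incidence h1 h2 h3
      exact Finset.mem_image.2 ⟨(i, j), Finset.mem_univ _, rfl⟩
    unfold cH
    by_cases h : (u ∈ Simp1 (n + 1) ∧ v ∈ Simp2 (n + 1) ∧ u ⊆ v) ∨
        (v ∈ Simp1 (n + 1) ∧ u ∈ Simp2 (n + 1) ∧ v ⊆ u)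
    · rw [if_pos h]
      rcases h with ⟨h1, h2, h3⟩ | ⟨h1, h2, h3⟩
      · rw [if_pos (hI u v h1 h2 h3)]
        exact le_add_of_nonneg_right p2
      · rw [if_pos (hI v u h1 h2 h3)]
        have : g (v, u) = 1 / 2 * (f u - f v) ^ 2 := by simp only [g]; ring
        linarith
    · rw [if_neg h, zero_mul]
      exact add_nonneg p1 p2
  have hsum : ∑ k ∈ V ×ˢ V, (if k ∈ I then g k else 0) ≤ ∑ k ∈ I, g k := by
    rw [Finset.sum_ite_mem]
    exact Finset.sum_le_sum_of_subset_of_nonneg Finset.inter_subset_right fun k _ _ => hg k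
  have hswap : ∑ k ∈ V ×ˢ V, (if k.swap ∈ I then g k.swap else 0)
      = ∑ k ∈ V ×ˢ V, (if k ∈ I then g k else 0) :=
    Finset.sum_equiv (Equiv.prodComm _ _) (by simp [and_comm]) fun k _ => rfl
  have himg : ∑ k ∈ I, g k ≤ ∑ k : Fin (leaves n).length × Fin 3,
      g (side (leaves n)[k.1].1 k.2, triPts (leaves n)[k.1].1) :=
    Finset.sum_image_le_of_nonneg fun k _ => hg k
  have := Finset.sum_le_sum hle
  rw [Finset.sum_add_distrib, hswap] at this
  linarith

lemma sq_le_energy {n : ℕ} {u v : Set Pt} (hu : u ∈ Simp1 (n + 1)) (hv : v ∈ Simp2 (n + 1))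
    (huv : u ⊆ v) (f : Set Pt → ℝ) : (f u - f v) ^ 2 ≤ 4 * energy (cH (n + 1)) f := by
  classical
  obtain ⟨V, hV, hE⟩ := energy_eq_sum n
  have hc : cH (n + 1) u v = 1 / 2 := if_pos (.inl ⟨hu, hv, huv⟩)
  obtain ⟨huV, hvV⟩ := hV u v (by rw [hc]; norm_num)
  have hnn : ∀ p q, 0 ≤ cH (n + 1) p q * (f p - f q) ^ 2 := fun p q =>
    mul_nonneg (cH_nonneg _ _ _) (sq_nonneg _)
  have h1 := Finset.single_le_sum (f := fun q => cH (n + 1) u q * (f u - f q) ^ 2)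
    (fun q _ => hnn u q) hvV
  have h2 := Finset.single_le_sum
    (f := fun p => ∑ q ∈ V, cH (n + 1) p q * (f p - f q) ^ 2)
    (fun p _ => Finset.sum_nonneg fun q _ => hnn p q) huV
  simp only [hc] at h1
  rw [hE]
  linarith

/-! ### Connectedness -/

/-- The potential difference between `u` and `v` is controlled by the energy. -/
def Conn (N : ℕ) (u v : Set Pt) : Prop :=
  ∃ K : ℝ, ∀ f : Set Pt → ℝ, |f u - f v| ≤ K * √(energy (cH N) f)

lemma conn_equivalence (N : ℕ) : Equivalence (Conn N) where
  refl u := ⟨0, fun f => by simp⟩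
  symm := fun ⟨K, h⟩ => ⟨K, fun f => by rw [abs_sub_comm]; exact h f⟩
  trans := fun ⟨K, h⟩ ⟨K', h'⟩ => ⟨K + K', fun f => by
    have := abs_sub_le (f _) (f _) (f _) |>.trans (add_le_add (h f) (h' f))
    linarith⟩

lemma conn_side {n : ℕ} {t : Tri} (ht : t ∈ TriSet (n + 1)) (j : Fin 3) :
    Conn (n + 1) (side t j) (triPts t) := by
  refine ⟨2, fun f => ?_⟩
  have h := sq_le_energy (mem_simp1.2 ⟨t, ht, j, rfl⟩) (mem_simp2.2 ⟨t, ht, rfl⟩)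
    (side_subset t j) f
  rw [← Real.sqrt_sq_eq_abs]
  refine (Real.sqrt_le_sqrt h).trans (le_of_eq ?_)
  rw [Real.sqrt_mul (by norm_num), show (4 : ℝ) = 2 ^ 2 by norm_num, Real.sqrt_sq (by norm_num)]

/-- The endpoint, other than `p`, of the edge at `p` in the `n`-fold subdivided segment from `p`
to `q`. -/
def near : ℕ → Pt → Pt → Pt
  | 0, _, q => q
  | n + 1, p, q => near n p (mpt p q)

lemma near_mem (n : ℕ) (p q : Pt) : near n p q ∈ segment ℝ p q := by
  induction n generalizing q with
  | zero => exact right_mem_segment ℝ p q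
  | succ n ih =>
    have hm : mpt p q ∈ segment ℝ p q :=
      ⟨2⁻¹, 2⁻¹, by norm_num, by norm_num, by norm_num, by simp [mpt]⟩
    exact (convex_segment p q).segment_subset (left_mem_segment ℝ p q) hm (ih _)

/-- A subdivided side contributes the edge at either of its endpoints. -/
lemma exists_near (n : ℕ) {y : Tri × Lab} {p q : Pt} (h : ∃ j, {p, q} = side y.1 j) :
    ∃ w ∈ desc n y, ∃ j, {p, near n p q} = side w.1 j := by
  induction n generalizing y q with
  | zero => exact ⟨y, by simp [desc], h⟩
  | succ n ih =>
    obtain ⟨z, hz, hz'⟩ : ∃ z ∈ kids y, ({p, mpt p q} : Set Pt) = side z.1 2 := by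
      obtain ⟨⟨a, b, c⟩, x, y, z⟩ := y
      have hm : ∀ a b, mpt a b = mpt b a := fun a b => by simp [mpt, add_comm]
      obtain ⟨j, hj⟩ := h
      simp only [kids, List.mem_cons, List.not_mem_nil, or_false, exists_eq_or_imp,
        exists_eq_left, side]
      fin_cases j <;> simp only [side, Set.pair_eq_pair_iff] at hj <;>
        rcases hj with ⟨rfl, rfl⟩ | ⟨rfl, rfl⟩ <;> simp [hm]
    obtain ⟨w, hw, j, hj⟩ := ih ⟨2, hz'⟩
    exact ⟨w, List.mem_flatMap.2 ⟨z, hz, hw⟩, j, hj⟩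

/-- All triangles descending from `y` and all triangles descending from `z` are connected. -/
def Link (N n : ℕ) (y z : Tri × Lab) : Prop :=
  ∀ w ∈ desc n y, ∀ w' ∈ desc n z, Conn N (triPts w.1) (triPts w'.1)

/-- Triangles with a common side are linked through an edge of the subdivided side. -/
lemma link_of_side {N n : ℕ} {y z : Tri × Lab} (hy : Link N n y y) (hz : Link N n z z)
    (hy' : ∀ w ∈ desc n y, ∀ j, Conn N (side w.1 j) (triPts w.1))
    (hz' : ∀ w ∈ desc n z, ∀ j, Conn N (side w.1 j) (triPts w.1))
    {j k : Fin 3} (h : side y.1 j = side z.1 k) : Link N n y z := by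
  obtain ⟨p, q, hpq⟩ : ∃ p q, {p, q} = side y.1 j := by
    fin_cases j
    exacts [⟨_, _, rfl⟩, ⟨_, _, rfl⟩, ⟨_, _, rfl⟩]
  obtain ⟨v, hv, i, hi⟩ := exists_near n ⟨j, hpq⟩
  obtain ⟨v', hv', i', hi'⟩ := exists_near n ⟨k, hpq.trans h⟩
  have E := conn_equivalence N
  intro w hw w' hw'
  have h1 := E.symm (hy' v hv i)
  rw [← hi, hi'] at h1
  exact E.trans (hy w hw v hv) (E.trans h1 (E.trans (hz' v' hv' i') (hz v' hv' w' hw')))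

lemma Link.trans {N n : ℕ} {x y z : Tri × Lab} (h : Link N n x y) (h' : Link N n y z) :
    Link N n x z := by
  obtain ⟨w, hw, -⟩ := exists_near n (y := y) ⟨0, rfl⟩
  exact fun v hv v' hv' => (conn_equivalence N).trans (h v hv w hw) (h' w hw v' hv')

lemma Link.symm {N n : ℕ} {x y : Tri × Lab} (h : Link N n x y) : Link N n y x :=
  fun v hv v' hv' => (conn_equivalence N).symm (h v' hv' v hv)

lemma link_self {N n : ℕ} {y : Tri × Lab}
    (hy : ∀ w ∈ desc n y, ∀ j, Conn N (side w.1 j) (triPts w.1)) : Link N n y y := by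
  induction n generalizing y with
  | zero =>
    intro w hw w' hw'
    simp only [desc, List.mem_singleton] at hw hw'
    rw [hw, hw']
    exact (conn_equivalence N).refl _
  | succ n ih =>
    have hk : ∀ z ∈ kids y, ∀ w ∈ desc n z, ∀ j, Conn N (side w.1 j) (triPts w.1) :=
      fun z hz w hw => hy w (List.mem_flatMap.2 ⟨z, hz, hw⟩)
    have hl : ∀ z ∈ kids y, ∀ z' ∈ kids y, ∀ j k, side z.1 j = side z'.1 k → Link N n z z' :=
      fun z hz z' hz' j k h => link_of_side (ih (hk z hz)) (ih (hk z' hz')) (hk z hz) (hk z' hz') h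
    suffices h : ∃ z₀, ∀ z ∈ kids y, Link N n z₀ z by
      obtain ⟨z₀, h⟩ := h
      intro w hw w' hw'
      obtain ⟨z, hz, hw⟩ := List.mem_flatMap.1 hw
      obtain ⟨z', hz', hw'⟩ := List.mem_flatMap.1 hw'
      exact (h z hz).symm.trans (h z' hz') w hw w' hw'
    obtain ⟨⟨a, b, c⟩, x, y, z⟩ := y
    -- go around the ring, crossing alternately edges at midpoints and edges at vertices
    simp only [kids, List.mem_cons, List.not_mem_nil, or_false, forall_eq_or_imp, forall_eq] at hl ⊢
    obtain ⟨⟨l11, l12, -⟩, ⟨-, -, l23, -⟩, ⟨-, -, -, l34, -⟩, ⟨-, -, -, -, -, l46⟩, -,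
      ⟨-, -, -, -, l65, -⟩⟩ := hl
    have m1 := l11 0 0 rfl
    have m2 := l12 0 0 rfl
    have m3 := m2.trans (l23 1 1 rfl)
    have m4 := m3.trans (l34 0 0 rfl)
    have m6 := m4.trans (l46 1 1 rfl)
    have m5 := m6.trans (l65 0 0 rfl)
    exact ⟨_, m1, m2, m3, m4, m5, m6⟩

/-! ### Conclusion -/

/-- The boundary sets are connected, so the effective conductance is positive. -/
lemma energy_lower (n : ℕ) : ∃ ε : ℝ, 0 < ε ∧ ∀ f : Set Pt → ℝ,
    (∀ p ∈ LsetH (n + 1) 0 ∪ LsetH (n + 1) 1, f p = 0) →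
    (∀ p ∈ LsetH (n + 1) 3 ∪ LsetH (n + 1) 4, f p = 1) → ε ≤ energy (cH (n + 1)) f := by
  have hmem : ∀ y ∈ sectors, ∀ w ∈ desc n y, w.1 ∈ TriSet (n + 1) := fun y hy w hw =>
    (mem_triSet n w.1).2 ⟨w.2, List.mem_flatMap.2 ⟨y, hy, hw⟩⟩
  have hc : ∀ y ∈ sectors, ∀ w ∈ desc n y, ∀ j, Conn (n + 1) (side w.1 j) (triPts w.1) :=
    fun y hy w hw j => conn_side (hmem y hy w hw) j
  have hl : ∀ y ∈ sectors, ∀ z ∈ sectors, ∀ j k, side y.1 j = side z.1 k → Link (n + 1) n y z :=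
    fun y hy z hz j k h =>
      link_of_side (link_self (hc y hy)) (link_self (hc z hz)) (hc y hy) (hc z hz) h
  simp only [sectors, List.mem_cons, List.not_mem_nil, or_false, forall_eq_or_imp, forall_eq]
    at hl hmem hc
  obtain ⟨⟨-, l01, -⟩, ⟨-, -, l12, -⟩, ⟨-, -, -, l23, -⟩, -⟩ := hl
  have l03 := ((l01 0 1 rfl).trans (l12 0 1 rfl)).trans (l23 0 1 rfl)
  obtain ⟨v, hv, i, hi⟩ := exists_near n (p := hexCorner 0) (q := hexCorner 1)
    (y := ((hexCorner 0, hexCorner 1, 0), (1 / 2, 1 / 2, 0))) ⟨2, rfl⟩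
  obtain ⟨v', hv', i', hi'⟩ := exists_near n (p := hexCorner 3) (q := hexCorner 4)
    (y := ((hexCorner 3, hexCorner 4, 0), (1 / 2, 1 / 2, 1))) ⟨2, rfl⟩
  have E := conn_equivalence (n + 1)
  obtain ⟨K, hK⟩ := E.trans (hc.1 v hv i) (E.trans (l03 v hv v' hv')
    (E.symm (hc.2.2.2.1 v' hv' i')))
  have hs : ∀ (w : Tri × Lab) (j : Fin 3) (m : ℕ), w.1 ∈ TriSet (n + 1) →
      {hexCorner m, near n (hexCorner m) (hexCorner (m + 1))} = side w.1 j →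
      side w.1 j ∈ LsetH (n + 1) m := by
    intro w j m hw h
    refine ⟨Or.inr (mem_simp1.2 ⟨_, hw, j, rfl⟩), ?_⟩
    rw [← h]
    refine convexHull_min ?_ (convex_segment _ _)
    rintro x (rfl | rfl)
    · exact left_mem_segment ℝ _ _
    · exact near_mem _ _ _
  have hA := hs v i 0 (hmem.1 v hv) hi
  have hB := hs v' i' 3 (hmem.2.2.2.1 v' hv') hi'
  have hbound : ∀ f : Set Pt → ℝ,
      (∀ p ∈ LsetH (n + 1) 0 ∪ LsetH (n + 1) 1, f p = 0) →
      (∀ p ∈ LsetH (n + 1) 3 ∪ LsetH (n + 1) 4, f p = 1) →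
      1 ≤ K * √(energy (cH (n + 1)) f) := by
    intro f h0 h1
    have := hK f
    rw [h0 _ (.inl hA), h1 _ (.inl hB)] at this
    simpa using this
  refine ⟨1 / (K ^ 2 + 1), by positivity, fun f h0 h1 => ?_⟩
  have h := hbound f h0 h1
  have hE : 0 < energy (cH (n + 1)) f := by
    by_contra hneg
    rw [Real.sqrt_eq_zero_of_nonpos (not_lt.1 hneg)] at h
    linarith
  have h2 : 1 ≤ (K * √(energy (cH (n + 1)) f)) ^ 2 := one_le_pow₀ h
  rw [mul_pow, Real.sq_sqrt hE.le] at h2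
  rw [div_le_iff₀ (by positivity)]
  linarith

lemma pot_leaf (n : ℕ) {w : Tri × Lab} (hw : w ∈ leaves n) {p q r : ℝ} (hg : Good p q r) :
    pot n (cα (ev w.1 p q r)) (cβ (ev w.1 p q r)) =
      loc 0 w.2.1 w.2.2.1 w.2.2.2 p q r := by
  obtain ⟨y, hy, hw⟩ := List.mem_flatMap.1 hw
  obtain ⟨a, b, c, hg', h1, h2⟩ := loc_desc n hw hg
  rw [← h1, pot_sector n hy hg', h2]

lemma centroid_pair {p q : Pt} (h : p ≠ q) :
    ((({p, q} : Set Pt).ncard : ℝ))⁻¹ • ∑ᶠ x ∈ ({p, q} : Set Pt), x = (2 : ℝ)⁻¹ • (p + q) := by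
  rw [Set.ncard_pair h, finsum_mem_pair h]
  norm_num

lemma centroid_triple {t : Tri} (h : area t ≠ 0) :
    ((triPts t).ncard : ℝ)⁻¹ • ∑ᶠ x ∈ triPts t, x = ev t (1 / 3) (1 / 3) (1 / 3) := by
  obtain ⟨h1, h2, h3⟩ := distinct h
  have hn : t.1 ∉ ({t.2.1, t.2.2} : Set Pt) := by simp [h1, h3]
  rw [triPts, finsum_mem_insert _ hn (Set.toFinite _), finsum_mem_pair h2,
    Set.ncard_insert_of_notMem hn (Set.toFinite _), Set.ncard_pair h2]
  norm_num [ev, add_assoc]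

lemma centroid_side {t : Tri} (h : area t ≠ 0) (j : Fin 3) :
    ((side t j).ncard : ℝ)⁻¹ • ∑ᶠ x ∈ side t j, x =
      match j with
      | 0 => ev t 0 (1 / 2) (1 / 2)
      | 1 => ev t (1 / 2) 0 (1 / 2)
      | 2 => ev t (1 / 2) (1 / 2) 0 := by
  obtain ⟨h1, h2, h3⟩ := distinct h
  fin_cases j
  · simp only [side]; rw [centroid_pair h2]; simp [ev]
  · simp only [side]; rw [centroid_pair h3]; simp [ev]
  · simp only [side]; rw [centroid_pair h1]; simp [ev]

lemma centroid_mem {n : ℕ} {s : Set Pt} (hs : s ∈ Simp2 (n + 1) ∪ Simp1 (n + 1)) :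
    (s.ncard : ℝ)⁻¹ • ∑ᶠ x ∈ s, x ∈ convexHull ℝ s := by
  have hfin : s.Finite ∧ s.Nonempty := by
    rcases hs with ⟨t, ht, rfl⟩ | ⟨t, ht, rfl | rfl | rfl⟩ <;>
      exact ⟨Set.toFinite _, Set.insert_nonempty _ _⟩
  obtain ⟨F, rfl⟩ := hfin.1.exists_finset_coe
  rw [finsum_mem_coe_finset, Set.ncard_coe_finset, Finset.smul_sum]
  have hF : (F.card : ℝ) ≠ 0 := by
    have := hfin.2
    simp only [Finset.coe_nonempty] at this
    exact_mod_cast this.card_pos.ne'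
  refine (convex_convexHull ℝ _).sum_mem (fun _ _ => by positivity) ?_
    fun x hx => subset_convexHull ℝ _ hx
  simp [hF]

/-- The potential has the prescribed boundary values and its energy decays like `(4 / 5) ^ n`; the
initial value is four sectors with energy `1 / 12` each. -/
lemma energy_upper (n : ℕ) :
    (∀ p ∈ LsetH (n + 1) 0 ∪ LsetH (n + 1) 1, potSet n p = 0) ∧
    (∀ p ∈ LsetH (n + 1) 3 ∪ LsetH (n + 1) 4, potSet n p = 1) ∧
    energy (cH (n + 1)) (potSet n) ≤ (4 / 5) ^ n * (1 / 3) := by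
  refine ⟨?_, ?_, ?_⟩
  · rintro p (h | h)
    · exact pot_side.1 (.inl (h.2 (centroid_mem h.1)))
    · exact pot_side.1 (.inr (h.2 (centroid_mem h.1)))
  · rintro p (h | h)
    · exact pot_side.2 (.inl (h.2 (centroid_mem h.1)))
    · exact pot_side.2 (.inr (h.2 (centroid_mem h.1)))
  · refine (energy_le n _).trans (le_of_eq ?_)
    have hleaf : ∀ w ∈ leaves n, ∑ j : Fin 3,
        1 / 2 * (potSet n (side w.1 j) - potSet n (triPts w.1)) ^ 2 = triEnergy w.2 := by
      intro w hw
      have ha := area_leaves n hw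
      have e : potSet n (triPts w.1) = (w.2.1 + w.2.2.1 + w.2.2.2) / 3 := by
        simp only [potSet]
        rw [centroid_triple ha, pot_leaf n hw (by unfold Good; norm_num)]
        simp [loc]
      have e0 : potSet n (side w.1 0) = w.2.1 := by
        simp only [potSet]
        rw [centroid_side ha 0]
        exact (pot_leaf n hw (by unfold Good; norm_num)).trans (by simp [loc])
      have e1 : potSet n (side w.1 1) = w.2.2.1 := by
        simp only [potSet]
        rw [centroid_side ha 1]
        exact (pot_leaf n hw (by unfold Good; norm_num)).trans (by simp [loc])
      have e2 : potSet n (side w.1 2) = w.2.2.2 := by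
        simp only [potSet]
        rw [centroid_side ha 2]
        exact (pot_leaf n hw (by unfold Good; norm_num)).trans (by simp [loc])
      rw [Fin.sum_univ_three, e, e0, e1, e2, triEnergy]
      ring
    refine (Finset.sum_congr rfl fun (i : Fin (leaves n).length) _ =>
      hleaf (leaves n)[i] (List.getElem_mem _)).trans ?_
    refine (Fin.sum_univ_fun_getElem (leaves n) fun w => triEnergy w.2).trans ?_
    simp only [leaves, sectors, List.flatMap_cons, List.flatMap_nil, List.map_append,
      List.sum_append, triEnergy_desc]
    simp only [triEnergy, List.map_nil, List.sum_nil]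
    ring

/-- Lower bound on the hexacarpet resistance. -/
theorem hexacarpet_lower :
    ∃ c : ℝ, 0 < c ∧ ∀ n : ℕ, 1 ≤ n → RH n ≥ c * (5 / 4 : ℝ) ^ n := by
  refine ⟨12 / 5, by norm_num, fun n hn => ?_⟩
  obtain ⟨n, rfl⟩ := Nat.exists_eq_add_of_le' hn
  obtain ⟨ε, hε, hlow⟩ := energy_lower n
  obtain ⟨h0, h1, hup⟩ := energy_upper n
  unfold RH effRes
  set S := {e : ℝ | ∃ f : Set Pt → ℝ, (∀ p ∈ LsetH (n + 1) 0 ∪ LsetH (n + 1) 1, f p = 0) ∧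
    (∀ p ∈ LsetH (n + 1) 3 ∪ LsetH (n + 1) 4, f p = 1) ∧ e = energy (cH (n + 1)) f} with hS
  have hlb : ∀ e ∈ S, ε ≤ e := by
    rintro e ⟨f, hf0, hf1, rfl⟩
    exact hlow f hf0 hf1
  have hmem : energy (cH (n + 1)) (potSet n) ∈ S := ⟨_, h0, h1, rfl⟩
  have hpos : 0 < sInf S := hε.trans_le (le_csInf ⟨_, hmem⟩ hlb)
  have hle : sInf S ≤ (4 / 5) ^ n * (1 / 3) := (csInf_le ⟨ε, hlb⟩ hmem).trans hup
  calc (sInf S)⁻¹ ≥ ((4 / 5 : ℝ) ^ n * (1 / 3))⁻¹ := inv_anti₀ hpos hle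
    _ = 12 / 5 * (5 / 4 : ℝ) ^ (n + 1) := by
      rw [mul_inv, ← inv_pow, pow_succ]
      norm_num
      ring

end BarycentricHexacarpet
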